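/- Fix real numbers q > 0 and r > 1. With P₁₂(n) = √(1 + q/(π²n^{2+r})) − 1, P₂₂(n) = √((q/nʳ + 2P₁₂(n))/(n²π²)) and P₁₁(n) = n²π²(1 + P₁₂(n))P₂₂(n), there exists a constant c₂ > 0 (one may take c₂ = π√(2q)(1 + q/(2π²))) such that 0 < P₁₁(n) ≤ c₂ · n^{1−r/2} for every integer n ≥ 1. -/

import Mathlib

/-- `P₁₂(n)` in the Dirichlet boundary control example. -/
noncomputable def dirP12 (q r : ℝ) (n : ℕ) : ℝ :=
  Real.sqrt (1 + q / (Real.pi ^ 2 * (n : ℝ) ^ ((2 : ℝ) + r))) - 1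

/-- `P₂₂(n)` in the Dirichlet boundary control example. -/
noncomputable def dirP22 (q r : ℝ) (n : ℕ) : ℝ :=
  Real.sqrt ((q / (n : ℝ) ^ r + 2 * dirP12 q r n) / ((n : ℝ) ^ 2 * Real.pi ^ 2))

/-- `P₁₁(n)` in the Dirichlet boundary control example. -/
noncomputable def dirP11 (q r : ℝ) (n : ℕ) : ℝ :=
  (n : ℝ) ^ 2 * Real.pi ^ 2 * (1 + dirP12 q r n) * dirP22 q r n

/-!
Pulling `n² π²` out of the square root gives `P₁₁ = n π (1 + P₁₂) √(q / nʳ + 2 P₁₂)`. The inequality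
`√(1 + x) ≤ 1 + x / 2` yields `2 P₁₂ ≤ q / (π² n^{2+r})`, which controls both factors: it is at most
`q / π²` because `n^{2+r} ≥ 1`, and at most `q / nʳ` because `π² n² ≥ 1`. Hence the square root is
at most `√(2 q / nʳ) = √(2 q) n^{-r/2}`.
-/

theorem mul_sqrt_div_rpow {x : ℝ} (hx : 0 < x) (a r : ℝ) :
    x * √(a / x ^ r) = √a * x ^ (1 - r / 2) := by
  have hsqrt : √(x ^ r) = x ^ (r / 2) := by
    rw [Real.sqrt_eq_rpow, ← Real.rpow_mul hx.le, mul_one_div]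
  rw [Real.sqrt_div' a (Real.rpow_nonneg hx.le r), hsqrt, Real.rpow_sub hx, Real.rpow_one]
  ring

section

variable {q r : ℝ} {n : ℕ}

theorem dirP12_nonneg (hq : 0 ≤ q) : 0 ≤ dirP12 q r n := by
  rw [dirP12, sub_nonneg, Real.one_le_sqrt, le_add_iff_nonneg_right]
  positivity

theorem two_mul_dirP12_le (hq : 0 ≤ q) :
    2 * dirP12 q r n ≤ q / (Real.pi ^ 2 * (n : ℝ) ^ (2 + r)) := by
  have hx : 0 ≤ q / (Real.pi ^ 2 * (n : ℝ) ^ (2 + r)) := by positivity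
  have hsqrt := Real.sqrt_one_add_le (neg_one_lt_zero.le.trans hx)
  rw [dirP12]
  linarith

theorem dirP12_le_of_neg_two_le (hq : 0 ≤ q) (hr : -2 ≤ r) (hn : 1 ≤ n) :
    dirP12 q r n ≤ q / (2 * Real.pi ^ 2) := by
  have hpow : 1 ≤ (n : ℝ) ^ (2 + r) :=
    Real.one_le_rpow (Nat.one_le_cast.mpr hn) (by linarith)
  have htwo : 2 * dirP12 q r n ≤ q / Real.pi ^ 2 :=
    (two_mul_dirP12_le hq).trans <|
      div_le_div_of_nonneg_left hq (by positivity) (le_mul_of_one_le_right (by positivity) hpow)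
  rw [mul_comm, ← div_div]
  linarith

theorem two_mul_dirP12_le_div_rpow (hq : 0 ≤ q) (hn : 1 ≤ n) :
    2 * dirP12 q r n ≤ q / (n : ℝ) ^ r := by
  have hn_pos : (0 : ℝ) < n := Nat.cast_pos.mpr hn
  have hpi : 1 ≤ Real.pi ^ 2 := one_le_pow₀ (by linarith [Real.pi_gt_three])
  have hsq : 1 ≤ (n : ℝ) ^ 2 := one_le_pow₀ (Nat.one_le_cast.mpr hn)
  have hle : (n : ℝ) ^ r ≤ Real.pi ^ 2 * (n : ℝ) ^ (2 + r) := by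
    rw [Real.rpow_add hn_pos, Real.rpow_two, ← mul_assoc]
    exact le_mul_of_one_le_left (by positivity) (one_le_mul_of_one_le_of_one_le hpi hsq)
  exact (two_mul_dirP12_le hq).trans (div_le_div_of_nonneg_left hq (by positivity) hle)

theorem dirP11_eq_mul_sqrt (q r : ℝ) (n : ℕ) :
    dirP11 q r n =
      n * Real.pi * (1 + dirP12 q r n) * √(q / (n : ℝ) ^ r + 2 * dirP12 q r n) := by
  rw [dirP11, dirP22, ← mul_pow, Real.sqrt_div' _ (by positivity), Real.sqrt_sq (by positivity)]
  rcases eq_or_ne (n : ℝ) 0 with hn | hn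
  · simp [hn]
  · field_simp

theorem dirP11_pos (hq : 0 < q) (hn : 1 ≤ n) : 0 < dirP11 q r n := by
  have : (0 : ℝ) < n := Nat.cast_pos.mpr hn
  have : 0 ≤ dirP12 q r n := dirP12_nonneg hq.le
  rw [dirP11_eq_mul_sqrt]
  positivity

theorem dirP11_le (hq : 0 ≤ q) (hr : -2 ≤ r) (hn : 1 ≤ n) :
    dirP11 q r n ≤
      Real.pi * √(2 * q) * (1 + q / (2 * Real.pi ^ 2)) * (n : ℝ) ^ (1 - r / 2) := by
  have hsum : q / (n : ℝ) ^ r + 2 * dirP12 q r n ≤ 2 * q / (n : ℝ) ^ r := by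
    rw [mul_div_assoc, two_mul (q / _)]
    gcongr
    exact two_mul_dirP12_le_div_rpow hq hn
  calc
    dirP11 q r n
      = n * Real.pi * (1 + dirP12 q r n) * √(q / (n : ℝ) ^ r + 2 * dirP12 q r n) :=
        dirP11_eq_mul_sqrt q r n
    _ ≤ n * Real.pi * (1 + q / (2 * Real.pi ^ 2)) * √(2 * q / (n : ℝ) ^ r) := by
        gcongr
        exact dirP12_le_of_neg_two_le hq hr hn
    _ = Real.pi * (1 + q / (2 * Real.pi ^ 2)) * (n * √(2 * q / (n : ℝ) ^ r)) := by ring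
    _ = Real.pi * (1 + q / (2 * Real.pi ^ 2)) * (√(2 * q) * (n : ℝ) ^ (1 - r / 2)) := by
        rw [mul_sqrt_div_rpow (Nat.cast_pos.mpr hn)]
    _ = Real.pi * √(2 * q) * (1 + q / (2 * Real.pi ^ 2)) * (n : ℝ) ^ (1 - r / 2) := by ring

end

theorem dirichlet_example_P11_bound_general (q r : ℝ) (hq : 0 < q) (hr : -2 ≤ r) :
    ∃ c₂ : ℝ, 0 < c₂ ∧ c₂ = Real.pi * √(2 * q) * (1 + q / (2 * Real.pi ^ 2)) ∧
      ∀ n : ℕ, 1 ≤ n →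
        0 < dirP11 q r n ∧ dirP11 q r n ≤ c₂ * (n : ℝ) ^ (1 - r / 2) :=
  ⟨_, by positivity, rfl, fun _ hn => ⟨dirP11_pos hq hn, dirP11_le hq.le hr hn⟩⟩

/-- In the Dirichlet example there is a constant `c₂ > 0`
(one may take `c₂ = π√(2q)(1 + q/(2π²))`) such that
`0 < P₁₁(n) ≤ c₂ · n^{1−r/2}` for every `n ≥ 1`. -/
theorem dirichlet_example_P11_bound (q r : ℝ) (hq : 0 < q) (hr : 1 < r) :
    ∃ c₂ : ℝ, 0 < c₂ ∧ c₂ = Real.pi * Real.sqrt (2 * q) * (1 + q / (2 * Real.pi ^ 2)) ∧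
      ∀ n : ℕ, 1 ≤ n →
        0 < dirP11 q r n ∧ dirP11 q r n ≤ c₂ * (n : ℝ) ^ ((1 : ℝ) - r / 2) := by
  exact dirichlet_example_P11_bound_general q r hq (by linarith)
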